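/- arXiv:2308.06863 — 3 statements merged into one kernel-verified Lean document; each statement's English description precedes it below -/
import Mathlib

section
/- Let A, B, C > 0 and α, β ∈ (0,1) be real numbers with (1−α)(1−β)·A·B < (α·A + β·B)·C. Let a, b, c, i, j : ℕ → ℕ be sequences with a(n)/n → A, b(n)/n → B, c(n)/n → C, i(n)/n → α·A, j(n)/n → β·B, and 1 ≤ i(n) ≤ a(n), 1 ≤ j(n) ≤ b(n) for all n. Define T(n) := ∑_{k=0}^{a(n)−i(n)} ( (c(n))_k · (j(n)−b(n))_k · (i(n)−a(n))_k ) / ( (c(n)+1)_k · (1−a(n)−b(n))_k · k! ), where all Pochhammer symbols are taken in ℝ (with integer arguments cast to ℝ). Then T(n) > 0 for all sufficiently large n, and (1/n)·log T(n) converges, as n → ∞, to log of (α·A + B)^{α·A + B} · (A + β·B)^{A + β·B} / ( (A+B)^{A+B} · (α·A + β·B)^{α·A + β·B} ). -/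
/-!
Put `p = b - j`, `q = a - i`, `M = i + j - 1`. The series is alternating, but a transformation
makes all its terms non-negative (`hexSeries_eq`):
`T = (M+p)! (M+q)! / (M! (M+p+q)!) * S`, where
`S = ∑ₖ p^{k↓} q^{k↓} / ((M+1)_k (c+1)_k)` and `p^{k↓}` denotes the falling factorial.
Conceptually, `c / (c+k) = c ∫₀¹ x^{c+k-1} dx` turns `T` into an integral of the polynomial
`₂F₁[-p, -q; 1-a-b; x]`, which is re-expanded around `x = 1`. The finite version used here expands
`k! c! / (c+k)!` as an alternating sum (`sum_choose_div_eq`), exchanges the two summations, and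
evaluates the inner sum by Chu–Vandermonde (`sum_choose_vandermonde`).

The first term of `S` is `1`, and the `k`-th term is at most `(p q / ((M+1)(c+1)))^k`. The base of
this power tends to `(1-α)(1-β)AB / ((αA+βB)C) < 1`, so `S` stays between `1` and a constant and
does not contribute to the limit of `(1/n) log T`. The factorial prefactor is treated by
Stirling's formula (`tendsto_log_factorial_div`); the `log n` terms cancel because
`(M+p) + (M+q) = M + (M+p+q)`.
-/

open Filter Real Polynomial

/-- The terminating hypergeometric series
`₃F₂[c, −b+j, −a+i; c+1, 1−a−b; 1] = ∑_{k=0}^{a−i} (c)_k (j−b)_k (i−a)_k /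
  ((c+1)_k (1−a−b)_k k!)`, with all Pochhammer symbols taken in `ℝ`. -/
noncomputable def hexSeries (a b c i j : ℕ) : ℝ :=
  ∑ k ∈ Finset.range (a - i + 1),
    ((ascPochhammer ℝ k).eval (c : ℝ) * (ascPochhammer ℝ k).eval ((j : ℝ) - (b : ℝ)) *
        (ascPochhammer ℝ k).eval ((i : ℝ) - (a : ℝ))) /
      ((ascPochhammer ℝ k).eval ((c : ℝ) + 1) *
        (ascPochhammer ℝ k).eval (1 - (a : ℝ) - (b : ℝ)) * (Nat.factorial k : ℝ))

/-! ### The transformation to a series with non-negative terms -/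

/-- Pochhammer symbols at non-positive integers are signed falling factorials. -/
lemma ascPochhammer_eval_neg_natCast (p k : ℕ) :
    (ascPochhammer ℝ k).eval (-(p : ℝ)) = (-1) ^ k * (p.descFactorial k : ℝ) := by
  induction k with
  | zero => simp
  | succ k ih =>
    rw [ascPochhammer_succ_eval, ih, Nat.descFactorial_succ]
    rcases le_or_gt k p with h | h
    · push_cast [Nat.cast_sub h]
      ring
    · simp [Nat.descFactorial_eq_zero_iff_lt.2 h]

lemma ascPochhammer_eval_mul_add (x : ℝ) (k : ℕ) :
    (ascPochhammer ℝ k).eval x * (x + k) = (ascPochhammer ℝ k).eval (x + 1) * x := by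
  induction k with
  | zero => simp
  | succ k ih =>
    rw [ascPochhammer_succ_eval, ascPochhammer_succ_eval, ih]
    push_cast
    ring

/-- The beta-integral identity `∑ₗ (-1)ˡ C(k,l) / (d+1+l) = ∫₀¹ x^d (1-x)^k dx`, with the
integral replaced by its value. -/
lemma sum_choose_div_eq (k d : ℕ) :
    ∑ l ∈ Finset.range (k + 1), (-1 : ℝ) ^ l * (k.choose l : ℝ) / ((d : ℝ) + 1 + l) =
      (k.factorial : ℝ) * d.factorial / (d + 1 + k).factorial := by
  induction k generalizing d with
  | zero =>
    simp [Nat.factorial_succ]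
    field_simp
  | succ k ih =>
    -- Pascal's rule turns the sum into a difference of the sums for `d` and `d + 1`.
    have hsplit : ∑ l ∈ Finset.range (k + 1 + 1),
          (-1 : ℝ) ^ l * ((k + 1).choose l : ℝ) / ((d : ℝ) + 1 + l) =
        (∑ l ∈ Finset.range (k + 1), (-1 : ℝ) ^ l * (k.choose l : ℝ) / ((d : ℝ) + 1 + l)) -
        ∑ l ∈ Finset.range (k + 1),
          (-1 : ℝ) ^ l * (k.choose l : ℝ) / (((d + 1 : ℕ) : ℝ) + 1 + l) := by
      have h1 : ∑ l ∈ Finset.range (k + 1), (-1 : ℝ) ^ l * (k.choose l : ℝ) / ((d : ℝ) + 1 + l) =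
          ∑ l ∈ Finset.range (k + 1 + 1),
            (-1 : ℝ) ^ l * (k.choose l : ℝ) / ((d : ℝ) + 1 + l) := by
        rw [Finset.sum_range_succ _ (k + 1)]
        simp
      rw [h1, Finset.sum_range_succ', Finset.sum_range_succ' _ (k + 1), add_sub_right_comm,
        ← Finset.sum_sub_distrib]
      congr 1
      · refine Finset.sum_congr rfl fun l _ => ?_
        rw [Nat.choose_succ_succ]
        push_cast
        have e : (d : ℝ) + 1 + 1 + l = d + 1 + (l + 1) := by ring
        rw [e]
        ring
      · simp
    rw [hsplit, ih, ih]
    have e1 : d + 1 + (k + 1) = (d + 1 + k) + 1 := by ring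
    have e2 : d + 1 + 1 + k = (d + 1 + k) + 1 := by ring
    rw [e1, e2, Nat.factorial_succ (d + 1 + k), Nat.factorial_succ d, Nat.factorial_succ k]
    have h0 : ((d + 1 + k).factorial : ℝ) ≠ 0 := by positivity
    push_cast
    field_simp
    ring

/-- The Chu–Vandermonde evaluation that reduces the inner sum after exchanging summations;
`l` is the summation index of the original series. -/
lemma sum_choose_vandermonde (M p q l : ℕ) (hl : l ≤ q) :
    ∑ k ∈ Finset.range (q + 1),
        (p.choose k : ℝ) * k.choose l * q.choose k * k.factorial / (M + k).factorial =
      (p.choose l : ℝ) * q.descFactorial l * (M + p + q - l).factorial /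
        ((M + p).factorial * (M + q).factorial) := by
  rcases lt_or_ge p l with hp | hp
  · rw [Nat.choose_eq_zero_of_lt hp]
    simp only [Nat.cast_zero, zero_mul, zero_div]
    refine Finset.sum_eq_zero fun k _ => ?_
    rcases lt_or_ge p k with h | h
    · simp [Nat.choose_eq_zero_of_lt h]
    · simp [Nat.choose_eq_zero_of_lt (lt_of_le_of_lt h hp)]
  obtain ⟨r, rfl⟩ := Nat.exists_eq_add_of_le hl
  obtain ⟨s, rfl⟩ := Nat.exists_eq_add_of_le hp
  rw [add_assoc, Finset.sum_range_add, Finset.sum_eq_zero, zero_add]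
  swap
  · intro k hk
    simp [Nat.choose_eq_zero_of_lt (Finset.mem_range.1 hk)]
  have hterm : ∀ t ∈ Finset.range (r + 1),
      ((l + s).choose (l + t) : ℝ) * (l + t).choose l * (l + r).choose (l + t) *
          (l + t).factorial / (M + (l + t)).factorial =
        ((l + s).choose l : ℝ) * (l + r).factorial / (M + (l + r)).factorial *
          (s.choose t * (M + (l + r)).choose (r - t) : ℕ) := by
    intro t ht
    obtain ⟨u, rfl⟩ := Nat.exists_eq_add_of_le (Nat.lt_succ_iff.1 (Finset.mem_range.1 ht))
    have h1 := Nat.choose_mul (n := l + s) (k := l + t) (s := l) (by omega)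
    simp only [Nat.add_sub_cancel_left] at h1
    have h1' : ((l + s).choose (l + t) : ℝ) * (l + t).choose l = (l + s).choose l * s.choose t := by
      exact_mod_cast h1
    have e1 : l + (t + u) = (l + t) + u := by ring
    have e2 : M + ((l + t) + u) = u + (M + (l + t)) := by ring
    rw [Nat.add_sub_cancel_left, h1', e1, e2]
    push_cast
    rw [Nat.cast_add_choose ℝ (a := l + t) (b := u),
      Nat.cast_add_choose ℝ (a := u) (b := M + (l + t))]
    have := fun n : ℕ => (Nat.cast_ne_zero (R := ℝ)).2 (Nat.factorial_ne_zero n)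
    have a1 := this (l + t)
    have a2 := this u
    have a3 := this (M + (l + t))
    have a4 := this (u + (M + (l + t)))
    field_simp
  rw [Finset.sum_congr rfl hterm, ← Finset.mul_sum, ← Nat.cast_sum,
    ← Finset.Nat.sum_antidiagonal_eq_sum_range_succ_mk
      (fun ij : ℕ × ℕ => s.choose ij.1 * (M + (l + r)).choose ij.2), ← Nat.add_choose_eq]
  have e3 : s + (M + (l + r)) = r + (M + (l + s)) := by ring
  have e4 : M + (l + s) + (l + r) - l = r + (M + (l + s)) := by omega
  rw [e3, e4, Nat.cast_add_choose ℝ (a := r) (b := M + (l + s))]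
  have h5 : ((l + r).descFactorial l : ℝ) * r.factorial = (l + r).factorial := by
    have := Nat.factorial_mul_descFactorial (n := l + r) (k := l) (by omega)
    rw [Nat.add_sub_cancel_left, mul_comm] at this
    exact_mod_cast this
  rw [← h5]
  have := fun n : ℕ => (Nat.cast_ne_zero (R := ℝ)).2 (Nat.factorial_ne_zero n)
  have a1 := this r
  have a2 := this (M + (l + s))
  have a3 := this (M + (l + r))
  field_simp

/-- The series `∑ₖ p^{k↓} q^{k↓} / ((M+1)_k (c+1)_k)`, all of whose terms are non-negative
(`p^{k↓}` is the falling factorial). -/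
noncomputable def posSeries (M p q c : ℕ) : ℝ :=
  ∑ k ∈ Finset.range (q + 1), ((p.descFactorial k : ℝ) * q.descFactorial k) /
    (((M + 1).ascFactorial k : ℝ) * (c + 1).ascFactorial k)

lemma one_le_posSeries (M p q c : ℕ) : 1 ≤ posSeries M p q c := by
  unfold posSeries
  rw [Finset.sum_range_succ']
  simp only [Nat.descFactorial_zero, Nat.ascFactorial_zero, Nat.cast_one, mul_one, div_one]
  have : 0 ≤ ∑ k ∈ Finset.range q, ((p.descFactorial (k + 1) : ℝ) * q.descFactorial (k + 1)) /
    (((M + 1).ascFactorial (k + 1) : ℝ) * (c + 1).ascFactorial (k + 1)) :=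
    Finset.sum_nonneg fun k _ => by positivity
  linarith

lemma posSeries_le (M p q c : ℕ) (r : ℝ) (hr : r < 1)
    (h : (p : ℝ) * q / (((M : ℝ) + 1) * (c + 1)) ≤ r) : posSeries M p q c ≤ (1 - r)⁻¹ := by
  have hx0 : (0 : ℝ) ≤ (p : ℝ) * q / (((M : ℝ) + 1) * (c + 1)) := by positivity
  have hr0 : 0 ≤ r := hx0.trans h
  calc posSeries M p q c ≤ ∑ k ∈ Finset.range (q + 1), r ^ k := by
        refine Finset.sum_le_sum fun k _ => ?_
        refine le_trans ?_ (pow_le_pow_left₀ hx0 h k)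
        rw [div_pow, mul_pow, mul_pow]
        have h1 : (p.descFactorial k : ℝ) ≤ (p : ℝ) ^ k := by
          exact_mod_cast Nat.descFactorial_le_pow p k
        have h2 : (q.descFactorial k : ℝ) ≤ (q : ℝ) ^ k := by
          exact_mod_cast Nat.descFactorial_le_pow q k
        have h3 : ((M : ℝ) + 1) ^ k ≤ ((M + 1).ascFactorial k : ℝ) := by
          exact_mod_cast Nat.pow_succ_le_ascFactorial (M + 1) k
        have h4 : ((c : ℝ) + 1) ^ k ≤ ((c + 1).ascFactorial k : ℝ) := by
          exact_mod_cast Nat.pow_succ_le_ascFactorial (c + 1) k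
        gcongr
    _ ≤ ∑' k : ℕ, r ^ k :=
        (summable_geometric_of_lt_one hr0 hr).sum_le_tsum _ fun k _ => by positivity
    _ = (1 - r)⁻¹ := tsum_geometric_of_lt_one hr0 hr

/-- The summand of `hexSeries`, with `p = b - j`, `q = a - i`, `i + j = M + 1`, `c = d + 1`. -/
lemma hexSeries_term (a b d i j M p q k : ℕ) (ha : a = i + q) (hb : b = j + p)
    (hM : i + j = M + 1) (hk : k ≤ q) :
    ((ascPochhammer ℝ k).eval ((d + 1 : ℕ) : ℝ) * (ascPochhammer ℝ k).eval ((j : ℝ) - (b : ℝ)) *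
        (ascPochhammer ℝ k).eval ((i : ℝ) - (a : ℝ))) /
      ((ascPochhammer ℝ k).eval (((d + 1 : ℕ) : ℝ) + 1) *
        (ascPochhammer ℝ k).eval (1 - (a : ℝ) - (b : ℝ)) * (Nat.factorial k : ℝ)) =
    ((d : ℝ) + 1) * ((-1) ^ k / (d + 1 + k)) *
      ((p.choose k : ℝ) * q.descFactorial k * (M + p + q - k).factorial) /
        (M + p + q).factorial := by
  have e1 : (j : ℝ) - b = -(p : ℝ) := by rw [hb]; push_cast; ring
  have e2 : (i : ℝ) - a = -(q : ℝ) := by rw [ha]; push_cast; ring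
  have e3 : 1 - (a : ℝ) - b = -((M + p + q : ℕ) : ℝ) := by
    have : (i : ℝ) + j = M + 1 := by exact_mod_cast hM
    rw [ha, hb]; push_cast; linarith
  rw [e1, e2, e3, ascPochhammer_eval_neg_natCast, ascPochhammer_eval_neg_natCast,
    ascPochhammer_eval_neg_natCast, Nat.descFactorial_eq_factorial_mul_choose p k]
  have h1 := ascPochhammer_eval_mul_add (((d + 1 : ℕ) : ℝ)) k
  have h2 : 0 < (ascPochhammer ℝ k).eval (((d + 1 : ℕ) : ℝ) + 1) :=
    ascPochhammer_pos k _ (by positivity)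
  have h3 : ((M + p + q - k).factorial : ℝ) * ((M + p + q).descFactorial k : ℝ) =
      (M + p + q).factorial := by
    exact_mod_cast Nat.factorial_mul_descFactorial (n := M + p + q) (k := k) (by omega)
  have h4 : ((M + p + q).descFactorial k : ℝ) ≠ 0 := by
    have := (Nat.descFactorial_eq_zero_iff_lt (n := M + p + q) (k := k)).not.2 (by omega)
    exact_mod_cast this
  have h5 : ((M + p + q - k).factorial : ℝ) ≠ 0 := by positivity
  have h6 : (0 : ℝ) < (d : ℝ) + 1 + k := by positivity
  have h7 : ((-1 : ℝ) ^ k) * (-1) ^ k = 1 := by rw [← mul_pow]; simp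
  have h8 : ((-1 : ℝ) ^ k) ≠ 0 := by simp
  have h9 : (k.factorial : ℝ) ≠ 0 := by positivity
  rw [← h3]
  have h10 : (ascPochhammer ℝ k).eval ((d + 1 : ℕ) : ℝ) =
      (ascPochhammer ℝ k).eval (((d + 1 : ℕ) : ℝ) + 1) * ((d : ℝ) + 1) / (d + 1 + k) := by
    rw [eq_div_iff h6.ne']
    push_cast at h1 ⊢
    exact h1
  rw [h10]
  generalize (ascPochhammer ℝ k).eval (((d + 1 : ℕ) : ℝ) + 1) = P at h2 ⊢
  have h2' := h2.ne'
  push_cast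
  field_simp

/-- The alternating series `hexSeries` is a product of factorials times a series with
non-negative terms. -/
lemma hexSeries_eq (a b d i j M p q : ℕ) (ha : a = i + q) (hb : b = j + p)
    (hM : i + j = M + 1) :
    hexSeries a b (d + 1) i j =
      ((M + p).factorial : ℝ) * (M + q).factorial / (M.factorial * (M + p + q).factorial) *
        posSeries M p q (d + 1) := by
  have hsub : a - i = q := by omega
  have f0 := fun n : ℕ => (Nat.cast_ne_zero (R := ℝ)).2 (Nat.factorial_ne_zero n)
  have b1 := f0 (M + p)
  have b2 := f0 (M + q)
  have b3 := f0 M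
  have b4 := f0 (M + p + q)
  have hpos : posSeries M p q (d + 1) = (M.factorial : ℝ) * (d + 1) *
      ∑ k ∈ Finset.range (q + 1), ∑ l ∈ Finset.range (q + 1),
        (-1 : ℝ) ^ l / (d + 1 + l) *
          ((p.choose k : ℝ) * k.choose l * q.choose k * k.factorial / (M + k).factorial) := by
    unfold posSeries
    rw [Finset.mul_sum]
    refine Finset.sum_congr rfl fun k hk => ?_
    have hkq : k ≤ q := Nat.lt_succ_iff.1 (Finset.mem_range.1 hk)
    -- Terms with `l > k` vanish, so the inner sum can be cut at `k`.
    have hcut : ∑ l ∈ Finset.range (q + 1), (-1 : ℝ) ^ l / (d + 1 + l) *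
          ((p.choose k : ℝ) * k.choose l * q.choose k * k.factorial / (M + k).factorial) =
        ((p.choose k : ℝ) * q.choose k * k.factorial / (M + k).factorial) *
          ∑ l ∈ Finset.range (k + 1), (-1 : ℝ) ^ l * (k.choose l : ℝ) / ((d : ℝ) + 1 + l) := by
      rw [Finset.mul_sum, ← Finset.sum_subset (Finset.range_mono (by omega : k + 1 ≤ q + 1))]
      · exact Finset.sum_congr rfl fun l _ => by ring
      · intro l _ hl
        rw [Finset.mem_range, not_lt] at hl
        simp [Nat.choose_eq_zero_of_lt (by omega : k < l)]
    rw [hcut, sum_choose_div_eq]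
    have g1 : (M.factorial : ℝ) * (M + 1).ascFactorial k = (M + k).factorial := by
      exact_mod_cast Nat.factorial_mul_ascFactorial M k
    have g2 : ((d + 1).factorial : ℝ) * (d + 1 + 1).ascFactorial k = (d + 1 + k).factorial := by
      exact_mod_cast Nat.factorial_mul_ascFactorial (d + 1) k
    have g3 : ((d + 1).factorial : ℝ) = (d + 1) * d.factorial := by
      rw [Nat.factorial_succ]; push_cast; ring
    have g4 : ((M + 1).ascFactorial k : ℝ) ≠ 0 := by
      exact_mod_cast (Nat.ascFactorial_pos M k).ne'
    have g5 : ((d + 1 + 1).ascFactorial k : ℝ) ≠ 0 := by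
      exact_mod_cast (Nat.ascFactorial_pos (d + 1) k).ne'
    have g6 := f0 d
    have g7 : ((d : ℝ) + 1) ≠ 0 := by positivity
    rw [← g1, ← g2, g3, Nat.descFactorial_eq_factorial_mul_choose,
      Nat.descFactorial_eq_factorial_mul_choose]
    push_cast
    field_simp
  rw [hpos, Finset.sum_comm]
  unfold hexSeries
  rw [hsub, Finset.mul_sum, Finset.mul_sum]
  refine Finset.sum_congr rfl fun l hl => ?_
  have hlq : l ≤ q := Nat.lt_succ_iff.1 (Finset.mem_range.1 hl)
  rw [hexSeries_term a b d i j M p q l ha hb hM hlq, ← Finset.mul_sum,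
    sum_choose_vandermonde M p q l hlq]
  field_simp

/-! ### Asymptotics -/

/-- Stirling's formula at exponential order, for a sequence growing linearly in `n`. -/
lemma tendsto_log_factorial_div (x : ℕ → ℕ) (X : ℝ) (hX : 0 < X)
    (hx : Tendsto (fun n => (x n : ℝ) / n) atTop (nhds X)) :
    Tendsto (fun n : ℕ => (Real.log ((x n).factorial : ℝ) - x n * Real.log n) / n) atTop
      (nhds (X * Real.log X - X)) := by
  have hn : Tendsto (fun n : ℕ => (n : ℝ)) atTop atTop := tendsto_natCast_atTop_atTop
  have hxR : Tendsto (fun n => (x n : ℝ)) atTop atTop := by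
    refine (hx.pos_mul_atTop hX hn).congr' ?_
    filter_upwards [eventually_gt_atTop 0] with n h
    have : (n : ℝ) ≠ 0 := by positivity
    field_simp
  have hxN : Tendsto x atTop atTop := tendsto_natCast_atTop_iff.1 hxR
  have hlogx : Tendsto (fun n => Real.log ((x n : ℝ) / n)) atTop (nhds (Real.log X)) :=
    hx.log hX.ne'
  have hinv : Tendsto (fun n : ℕ => (1 : ℝ) / n) atTop (nhds 0) := tendsto_one_div_atTop_nhds_zero_nat
  have hlogn : Tendsto (fun n : ℕ => Real.log n / n) atTop (nhds 0) :=
    (Real.isLittleO_log_id_atTop.tendsto_div_nhds_zero).comp hn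
  have hS : Tendsto (fun n => Real.log (Stirling.stirlingSeq (x n))) atTop
      (nhds (Real.log (√π))) :=
    (Stirling.tendsto_stirlingSeq_sqrt_pi.comp hxN).log (by positivity)
  have key := (((hS.mul hinv).add
    ((((hlogx.add_const (Real.log 2)).mul hinv).add hlogn).const_mul (1 / 2))).add
      (hx.mul (hlogx.sub_const 1)))
  have e : Real.log (√π) * 0 + 1 / 2 * ((Real.log X + Real.log 2) * 0 + 0) +
      X * (Real.log X - 1) = X * Real.log X - X := by ring
  rw [e] at key
  refine key.congr' ?_
  filter_upwards [eventually_gt_atTop 0, hxN.eventually_gt_atTop 0] with n h0 hx0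
  have h0' : (n : ℝ) ≠ 0 := by positivity
  have hx0' : (x n : ℝ) ≠ 0 := by positivity
  have hst := Stirling.log_stirlingSeq_formula (x n)
  rw [Real.log_mul two_ne_zero hx0', Real.log_div hx0' (Real.exp_ne_zero 1), Real.log_exp] at hst
  rw [hst, Real.log_div hx0' h0']
  field_simp
  ring

/-- The exponential-order content of Lemma 5.4(b): when
`(1−α)(1−β)AB < (αA + βB)C` (the segment joining the two dents crosses the inscribed ellipse),
`T(n) > 0` eventually and `(1/n) log T(n)` converges to
`log((αA + B)^{αA + B} (A + βB)^{A + βB} / ((A+B)^{A+B} (αA + βB)^{αA + βB}))`. -/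
theorem hexSeries_log_asymptotics_inside (A B C α β : ℝ)
    (hA : 0 < A) (hB : 0 < B) (hC : 0 < C)
    (hα : 0 < α ∧ α < 1) (hβ : 0 < β ∧ β < 1)
    (hreg : (1 - α) * (1 - β) * A * B < (α * A + β * B) * C)
    (a b c i j : ℕ → ℕ)
    (ha : Tendsto (fun n => (a n : ℝ) / n) atTop (nhds A))
    (hb : Tendsto (fun n => (b n : ℝ) / n) atTop (nhds B))
    (hc : Tendsto (fun n => (c n : ℝ) / n) atTop (nhds C))
    (hi : Tendsto (fun n => (i n : ℝ) / n) atTop (nhds (α * A)))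
    (hj : Tendsto (fun n => (j n : ℝ) / n) atTop (nhds (β * B)))
    (hia : ∀ n, 1 ≤ i n ∧ i n ≤ a n) (hjb : ∀ n, 1 ≤ j n ∧ j n ≤ b n) :
    (∀ᶠ n : ℕ in atTop, 0 < hexSeries (a n) (b n) (c n) (i n) (j n)) ∧
    Tendsto (fun n : ℕ => (1 / (n : ℝ)) * Real.log (hexSeries (a n) (b n) (c n) (i n) (j n)))
      atTop
      (nhds (Real.log
        ((α * A + B) ^ (α * A + B) * (A + β * B) ^ (A + β * B) /
          ((A + B) ^ (A + B) * (α * A + β * B) ^ (α * A + β * B))))) := by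
  have hαA : 0 < α * A := mul_pos hα.1 hA
  have hβB : 0 < β * B := mul_pos hβ.1 hB
  have hinv : Tendsto (fun n : ℕ => (1 : ℝ) / n) atTop (nhds 0) := tendsto_one_div_atTop_nhds_zero_nat
  set M : ℕ → ℕ := fun n => i n + j n - 1 with hM
  set p : ℕ → ℕ := fun n => b n - j n with hp
  set q : ℕ → ℕ := fun n => a n - i n with hq
  have castM : ∀ n, (M n : ℝ) = i n + j n - 1 := fun n => by
    have := hia n
    simp only [hM]
    rw [Nat.cast_sub (by omega)]
    push_cast
    ring
  have castp : ∀ n, (p n : ℝ) = b n - j n := fun n => Nat.cast_sub (hjb n).2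
  have castq : ∀ n, (q n : ℝ) = a n - i n := fun n => Nat.cast_sub (hia n).2
  have tM : Tendsto (fun n => (M n : ℝ) / n) atTop (nhds (α * A + β * B)) := by
    have := (hi.add hj).sub hinv
    rw [sub_zero] at this
    refine this.congr fun n => ?_
    rw [castM]
    ring
  have tp : Tendsto (fun n => (p n : ℝ) / n) atTop (nhds ((1 - β) * B)) := by
    have := hb.sub hj
    rw [show B - β * B = (1 - β) * B by ring] at this
    refine this.congr fun n => ?_
    rw [castp]
    ring
  have tq : Tendsto (fun n => (q n : ℝ) / n) atTop (nhds ((1 - α) * A)) := by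
    have := ha.sub hi
    rw [show A - α * A = (1 - α) * A by ring] at this
    refine this.congr fun n => ?_
    rw [castq]
    ring
  have tMp : Tendsto (fun n => ((M n + p n : ℕ) : ℝ) / n) atTop (nhds (α * A + B)) := by
    have := tM.add tp
    rw [show α * A + β * B + (1 - β) * B = α * A + B by ring] at this
    refine this.congr fun n => ?_
    push_cast
    ring
  have tMq : Tendsto (fun n => ((M n + q n : ℕ) : ℝ) / n) atTop (nhds (A + β * B)) := by
    have := tM.add tq
    rw [show α * A + β * B + (1 - α) * A = A + β * B by ring] at this
    refine this.congr fun n => ?_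
    push_cast
    ring
  have tN : Tendsto (fun n => ((M n + p n + q n : ℕ) : ℝ) / n) atTop (nhds (A + B)) := by
    have := tMp.add tq
    rw [show α * A + B + (1 - α) * A = A + B by ring] at this
    refine this.congr fun n => ?_
    push_cast
    ring
  have hcpos : ∀ᶠ n in atTop, 1 ≤ c n := by
    filter_upwards [hc.eventually (lt_mem_nhds hC)] with n hn
    rcases Nat.eq_zero_or_pos (c n) with h | h
    · simp [h] at hn
    · exact h
  have hexact : ∀ᶠ n in atTop, hexSeries (a n) (b n) (c n) (i n) (j n) =
      ((M n + p n).factorial : ℝ) * (M n + q n).factorial /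
        ((M n).factorial * (M n + p n + q n).factorial) * posSeries (M n) (p n) (q n) (c n) := by
    filter_upwards [hcpos] with n hn
    obtain ⟨d, hd⟩ := Nat.exists_eq_add_of_le' hn
    have h1 := hia n
    have h2 := hjb n
    rw [hd]
    exact hexSeries_eq _ _ d _ _ _ _ _ (by simp only [hq]; omega) (by simp only [hp]; omega)
      (by simp only [hM]; omega)
  -- The ratio `p q / ((M+1)(c+1))` bounding consecutive terms has limit less than `1`.
  have hlim1 : (1 - β) * B * ((1 - α) * A) / ((α * A + β * B) * C) < 1 := by
    rw [div_lt_one (by positivity)]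
    linarith
  have tratio : Tendsto (fun n => (p n : ℝ) * q n / (((M n : ℝ) + 1) * (c n + 1))) atTop
      (nhds ((1 - β) * B * ((1 - α) * A) / ((α * A + β * B) * C))) := by
    have h1 := tM.add hinv
    have h2 := hc.add hinv
    rw [add_zero] at h1 h2
    refine ((tp.mul tq).div (h1.mul h2) (by positivity)).congr' ?_
    filter_upwards [eventually_gt_atTop 0] with n h0
    have h0' : (n : ℝ) ≠ 0 := by positivity
    simp only [Pi.div_apply]
    field_simp
  obtain ⟨r, hr1, hr2⟩ := exists_between hlim1
  have hSle : ∀ᶠ n in atTop, posSeries (M n) (p n) (q n) (c n) ≤ (1 - r)⁻¹ := by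
    filter_upwards [tratio.eventually (gt_mem_nhds hr1)] with n hn
    exact posSeries_le _ _ _ _ r hr2 hn.le
  have hlogS : Tendsto (fun n : ℕ => Real.log (posSeries (M n) (p n) (q n) (c n)) / n) atTop
      (nhds 0) := by
    have hup : Tendsto (fun n : ℕ => Real.log ((1 - r)⁻¹) / (n : ℝ)) atTop (nhds 0) :=
      tendsto_const_div_atTop_nhds_zero_nat _
    refine tendsto_of_tendsto_of_tendsto_of_le_of_le' tendsto_const_nhds hup ?_ ?_
    · exact Eventually.of_forall fun n =>
        div_nonneg (Real.log_nonneg (one_le_posSeries _ _ _ _)) (Nat.cast_nonneg n)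
    · filter_upwards [hSle] with n hn
      have := one_le_posSeries (M n) (p n) (q n) (c n)
      gcongr
  constructor
  · filter_upwards [hexact] with n hn
    have := one_le_posSeries (M n) (p n) (q n) (c n)
    rw [hn]
    positivity
  · have hABpos : 0 < α * A + β * B := by positivity
    have key := (((tendsto_log_factorial_div _ _ (by positivity) tMp).add
      (tendsto_log_factorial_div _ _ (by positivity) tMq)).sub
      ((tendsto_log_factorial_div _ _ hABpos tM).add
      (tendsto_log_factorial_div _ _ (by positivity) tN))).add hlogS
    have e : Real.log
        ((α * A + B) ^ (α * A + B) * (A + β * B) ^ (A + β * B) /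
          ((A + B) ^ (A + B) * (α * A + β * B) ^ (α * A + β * B))) =
        (α * A + B) * Real.log (α * A + B) - (α * A + B) +
          ((A + β * B) * Real.log (A + β * B) - (A + β * B)) -
          ((α * A + β * B) * Real.log (α * A + β * B) - (α * A + β * B) +
            ((A + B) * Real.log (A + B) - (A + B))) + 0 := by
      have h1 : 0 < α * A + B := by positivity
      have h2 : 0 < A + β * B := by positivity
      have h3 : 0 < A + B := by positivity
      rw [Real.log_div (by positivity) (by positivity), Real.log_mul (by positivity) (by positivity),
        Real.log_mul (by positivity) (by positivity), Real.log_rpow h1, Real.log_rpow h2,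
        Real.log_rpow h3, Real.log_rpow hABpos]
      ring
    rw [e]
    refine key.congr' ?_
    filter_upwards [hexact] with n hn
    have hS := one_le_posSeries (M n) (p n) (q n) (c n)
    have hS0 : posSeries (M n) (p n) (q n) (c n) ≠ 0 := by positivity
    rw [hn, Real.log_mul (by positivity) hS0, Real.log_div (by positivity) (by positivity),
      Real.log_mul (by positivity) (by positivity), Real.log_mul (by positivity) (by positivity)]
    -- The `log n` contributions cancel since `(M+p) + (M+q) = M + (M+p+q)`.
    push_cast
    ring
end

section
/- As m → ∞, the finite sum ∑_{k=0}^{m−1} ( (1−m)_k )² · (1−6m)_k / ( ( (2−3m)_k )² · (1−2m)_k ) converges to 3/2, where all Pochhammer symbols are taken in ℝ with the integer arguments 1−m, 1−6m, 2−3m, 1−2m cast to ℝ. (This is the limit of the balanced ₄F₃-series ₄F₃[1−m, 1−m, 1, 1−6m; 2−3m, 2−3m, 1−2m; 1] arising in the comparison of hexagons with two dents in the middles of adjacent sides versus opposite sides.) -/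
/-!
The proof is Tannery's theorem (dominated convergence for series). The ratio of consecutive
terms is `r m k = ((1-m+k)/(2-3m+k))² · (1-6m+k)/(1-2m+k)`. For fixed `k` it tends to
`(1/3)² · 3 = 1/3`, so the `k`-th term tends to `(1/3)^k`, and `∑ (1/3)^k = 3/2`.
For `k < m` the first fraction is at most `1/3` and the second at most `5`, so
`0 ≤ r m k ≤ 5/9`; the terms with `k ≥ m` vanish. Hence all terms are dominated by `(5/9)^k`.
-/

open Filter Polynomial

/-- The `k`-th term of the hypergeometric series with parameter `m`. -/
noncomputable def hypTerm (m k : ℕ) : ℝ :=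
  ((ascPochhammer ℝ k).eval (1 - (m : ℝ))) ^ 2 *
      (ascPochhammer ℝ k).eval (1 - 6 * (m : ℝ)) /
    (((ascPochhammer ℝ k).eval (2 - 3 * (m : ℝ))) ^ 2 *
      (ascPochhammer ℝ k).eval (1 - 2 * (m : ℝ)))

/-- The ratio of the terms of index `k + 1` and `k`. -/
noncomputable def hypRatio (m k : ℕ) : ℝ :=
  ((1 + k + (-1) * (m : ℝ)) / (2 + k + (-3) * (m : ℝ))) ^ 2 *
    ((1 + k + (-6) * (m : ℝ)) / (1 + k + (-2) * (m : ℝ)))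

lemma hypTerm_zero (m : ℕ) : hypTerm m 0 = 1 := by
  simp [hypTerm]

lemma hypTerm_succ (m k : ℕ) : hypTerm m (k + 1) = hypTerm m k * hypRatio m k := by
  unfold hypTerm hypRatio
  simp only [ascPochhammer_succ_eval]
  rw [div_pow, div_mul_div_comm, div_mul_div_comm]
  congr 1 <;> ring

lemma hypTerm_eq_zero {m k : ℕ} (hm : 1 ≤ m) (hk : m ≤ k) : hypTerm m k = 0 := by
  induction k, hk using Nat.le_induction with
  | base =>
    obtain ⟨n, rfl⟩ := Nat.exists_eq_add_of_le' hm
    rw [hypTerm_succ]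
    have h : (1 + n + (-1) * ((n + 1 : ℕ) : ℝ)) = 0 := by push_cast; ring
    simp only [hypRatio, h]
    simp
  | succ k _ ih => rw [hypTerm_succ, ih, zero_mul]

lemma abs_hypRatio_le {m k : ℕ} (hk : k < m) : |hypRatio m k| ≤ 5 / 9 := by
  have h : (k : ℝ) + 1 ≤ m := by exact_mod_cast hk
  have h0 : (0 : ℝ) ≤ k := k.cast_nonneg
  have h1 : |(1 + k + (-1) * (m : ℝ)) / (2 + k + (-3) * (m : ℝ))| ≤ 1 / 3 := by
    rw [abs_div, abs_of_nonpos (by linarith), abs_of_neg (by linarith),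
      div_le_iff₀ (by linarith)]
    linarith
  have h2 : |(1 + k + (-6) * (m : ℝ)) / (1 + k + (-2) * (m : ℝ))| ≤ 5 := by
    rw [abs_div, abs_of_neg (by linarith), abs_of_neg (by linarith),
      div_le_iff₀ (by linarith)]
    linarith
  rw [hypRatio, abs_mul, abs_pow]
  calc _ ≤ (1 / 3 : ℝ) ^ 2 * 5 := by gcongr
    _ = 5 / 9 := by norm_num

lemma abs_hypTerm_le {m : ℕ} (hm : 1 ≤ m) (k : ℕ) : |hypTerm m k| ≤ (5 / 9) ^ k := by
  induction k with
  | zero => simp [hypTerm_zero]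
  | succ k ih =>
    rcases lt_or_ge k m with hk | hk
    · rw [hypTerm_succ, abs_mul, pow_succ]
      gcongr
      exact abs_hypRatio_le hk
    · rw [hypTerm_eq_zero hm (by omega), abs_zero]
      positivity

lemma tendsto_affine_div (a b c d : ℝ) (hd : d ≠ 0) :
    Tendsto (fun m : ℕ => (a + b * (m : ℝ)) / (c + d * (m : ℝ))) atTop (nhds (b / d)) := by
  have key : ∀ a b : ℝ, Tendsto (fun m : ℕ => a / (m : ℝ) + b) atTop (nhds b) := fun a b => by
    simpa using (tendsto_const_div_atTop_nhds_zero_nat a).add_const b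
  refine ((key a b).div (key c d) hd).congr' ?_
  filter_upwards [eventually_ge_atTop 1] with m hm
  have hm' : (m : ℝ) ≠ 0 := by positivity
  rw [Pi.div_apply, ← mul_div_mul_right _ _ hm', add_mul, add_mul, div_mul_cancel₀ _ hm',
    div_mul_cancel₀ _ hm']

lemma tendsto_hypRatio (k : ℕ) :
    Tendsto (fun m => hypRatio m k) atTop (nhds (1 / 3)) := by
  have h := ((tendsto_affine_div (1 + k) (-1) (2 + k) (-3) (by norm_num)).pow 2).mul
    (tendsto_affine_div (1 + k) (-6) (1 + k) (-2) (by norm_num))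
  norm_num at h
  simpa [hypRatio] using h

lemma tendsto_hypTerm (k : ℕ) :
    Tendsto (fun m => hypTerm m k) atTop (nhds ((1 / 3) ^ k)) := by
  induction k with
  | zero => simp [hypTerm_zero]
  | succ k ih =>
    simp only [hypTerm_succ, pow_succ]
    exact ih.mul (tendsto_hypRatio k)

/-- The limit of the balanced `₄F₃`-series
`₄F₃[1−m, 1−m, 1, 1−6m; 2−3m, 2−3m, 1−2m; 1]` from the proof of Theorem 5.12: as `m → ∞`,
`∑_{k=0}^{m−1} ((1−m)_k)² (1−6m)_k / (((2−3m)_k)² (1−2m)_k)` converges to `3/2`. -/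
theorem balanced_4F3_limit :
    Tendsto (fun m : ℕ =>
        ∑ k ∈ Finset.range m,
          ((ascPochhammer ℝ k).eval (1 - (m : ℝ))) ^ 2 *
              (ascPochhammer ℝ k).eval (1 - 6 * (m : ℝ)) /
            (((ascPochhammer ℝ k).eval (2 - 3 * (m : ℝ))) ^ 2 *
              (ascPochhammer ℝ k).eval (1 - 2 * (m : ℝ))))
      atTop (nhds (3 / 2)) := by
  have h : Tendsto (fun m => ∑' k, hypTerm m k) atTop (nhds (∑' k : ℕ, (1 / 3 : ℝ) ^ k)) := by
    refine tendsto_tsum_of_dominated_convergence (bound := fun k => (5 / 9 : ℝ) ^ k)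
      (summable_geometric_of_lt_one (by norm_num) (by norm_num)) tendsto_hypTerm ?_
    filter_upwards [eventually_ge_atTop 1] with m hm k
    exact abs_hypTerm_le hm k
  rw [tsum_geometric_of_lt_one (by norm_num) (by norm_num),
    show (1 - 1 / 3 : ℝ)⁻¹ = 3 / 2 by norm_num] at h
  refine h.congr' ?_
  filter_upwards [eventually_ge_atTop 1] with m hm
  exact tsum_eq_sum fun k hk => hypTerm_eq_zero hm (by simpa using hk)
end

section
/- Let A, B, C > 0 and α, β ∈ (0,1) be real numbers with (1−α)(1−β)·A·B < (α·A + β·B)·C. Then ((1−α)A + C)^{(1−α)A + C} · ((1−β)B + C)^{(1−β)B + C} · (αA + B)^{αA + B} · (A + βB)^{A + βB} < ((1−α)A)^{(1−α)A} · ((1−β)B)^{(1−β)B} · (A+B+C)^{A+B+C} · C^C · (αA + βB)^{αA + βB}, where all powers are real powers. -/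
/-!
Put `a = (1-α)A`, `b = (1-β)B`, `c = C`, `s = αA + βB` and `N = a + b + c + s = A + B + C`. After
taking logarithms the claim says that the `2 × 2` contingency table with rows `(a, c)` and `(s, b)`
has positive mutual information: the four bases on the left are the row sums `a + c`, `s + b` and
the column sums `a + s`, `c + b`. This is Gibbs' inequality, strict because the hypothesis
`a b < s c` says that the table is not of rank one. Gibbs' inequality is obtained by adding the
bound `log y < y - 1` over the four cells (`cell_bound`), the linear terms cancelling
(`table_entropy`).
-/

/-- The contribution to Gibbs' inequality of a cell `x` with row sum `r` and column sum `t` in a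
table of total `N`. It is strict as soon as `x` differs from the independent value `r t / N`. -/
lemma cell_bound {x r t N : ℝ} (hx : 0 < x) (hr : 0 < r) (ht : 0 < t) (hN : 0 < N)
    (hne : r * t ≠ x * N) :
    x - r * t / N < x * (Real.log x + Real.log N - Real.log r - Real.log t) := by
  have hy : 0 < r * t / (x * N) := by positivity
  have hy1 : r * t / (x * N) ≠ 1 := by
    rw [Ne, div_eq_one_iff_eq (by positivity)]
    exact hne
  have h := Real.log_lt_sub_one_of_pos hy hy1
  rw [Real.log_div (by positivity) (by positivity), Real.log_mul hr.ne' ht.ne',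
    Real.log_mul hx.ne' hN.ne'] at h
  have h2 := mul_lt_mul_of_pos_left h hx
  have h3 : x * (r * t / (x * N) - 1) = r * t / N - x := by
    field_simp
  rw [h3] at h2
  linarith

/-- Positivity of the mutual information of the table with rows `(a, c)` and `(s, b)`. -/
lemma table_entropy {a b c s : ℝ} (ha : 0 < a) (hb : 0 < b) (hc : 0 < c) (hs : 0 < s)
    (h : a * b < s * c) :
    (a + c) * Real.log (a + c) + (b + c) * Real.log (b + c) + (s + b) * Real.log (s + b)
        + (a + s) * Real.log (a + s) <
      a * Real.log a + b * Real.log b + (a + b + c + s) * Real.log (a + b + c + s)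
        + c * Real.log c + s * Real.log s := by
  have hN : 0 < a + b + c + s := by positivity
  have h1 := cell_bound ha (add_pos ha hc) (add_pos ha hs) hN (by intro h'; nlinarith)
  have h2 := cell_bound hb (add_pos hs hb) (add_pos hb hc) hN (by intro h'; nlinarith)
  have h3 := cell_bound hc (add_pos ha hc) (add_pos hb hc) hN (by intro h'; nlinarith)
  have h4 := cell_bound hs (add_pos hs hb) (add_pos ha hs) hN (by intro h'; nlinarith)
  have h5 : (a + c) * (a + s) / (a + b + c + s) + (s + b) * (b + c) / (a + b + c + s)
      + (a + c) * (b + c) / (a + b + c + s) + (s + b) * (a + s) / (a + b + c + s)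
      = a + b + c + s := by
    field_simp
    ring
  linarith

/-- Inequality (5.19) from the proof of Theorem 5.2: if `(1−α)(1−β)AB < (αA + βB)C` (the
segment joining the two dents crosses the inscribed ellipse), then
`((1−α)A + C)^{(1−α)A + C} ((1−β)B + C)^{(1−β)B + C} (αA + B)^{αA + B} (A + βB)^{A + βB}
  < ((1−α)A)^{(1−α)A} ((1−β)B)^{(1−β)B} (A+B+C)^{A+B+C} C^C (αA + βB)^{αA + βB}`. -/
theorem hexagon_growth_rate_inequality (A B C α β : ℝ)
    (hA : 0 < A) (hB : 0 < B) (hC : 0 < C)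
    (hα : 0 < α ∧ α < 1) (hβ : 0 < β ∧ β < 1)
    (hreg : (1 - α) * (1 - β) * A * B < (α * A + β * B) * C) :
    ((1 - α) * A + C) ^ ((1 - α) * A + C) * ((1 - β) * B + C) ^ ((1 - β) * B + C) *
        (α * A + B) ^ (α * A + B) * (A + β * B) ^ (A + β * B) <
      ((1 - α) * A) ^ ((1 - α) * A) * ((1 - β) * B) ^ ((1 - β) * B) *
        (A + B + C) ^ (A + B + C) * C ^ C * (α * A + β * B) ^ (α * A + β * B) := by
  obtain ⟨hα0, hα1⟩ := hα
  obtain ⟨hβ0, hβ1⟩ := hβ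
  have ha : 0 < (1 - α) * A := mul_pos (by linarith) hA
  have hb : 0 < (1 - β) * B := mul_pos (by linarith) hB
  have hs : 0 < α * A + β * B := by positivity
  have key := table_entropy ha hb hC hs (by linarith)
  -- The remaining marginals and the total, in the form in which they occur in the statement.
  have e1 : α * A + B = α * A + β * B + (1 - β) * B := by ring
  have e2 : A + β * B = (1 - α) * A + (α * A + β * B) := by ring
  have e3 : A + B + C = (1 - α) * A + (1 - β) * B + C + (α * A + β * B) := by ring
  rw [e1, e2, e3]
  generalize (1 - α) * A = a at *
  generalize (1 - β) * B = b at *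
  generalize α * A + β * B = s at *
  rw [Real.rpow_def_of_pos (add_pos ha hC), Real.rpow_def_of_pos (add_pos hb hC),
    Real.rpow_def_of_pos (add_pos hs hb), Real.rpow_def_of_pos (add_pos ha hs),
    Real.rpow_def_of_pos ha, Real.rpow_def_of_pos hb, Real.rpow_def_of_pos hC,
    Real.rpow_def_of_pos hs,
    Real.rpow_def_of_pos (show 0 < a + b + C + s by positivity)]
  simp only [← Real.exp_add]
  rw [Real.exp_lt_exp]
  linarith
end
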